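/- Let 0 < q < 1, let μ, ν, h be as in the successive-approximation scheme with G[μ], G[ν], h bounded, u_0 = (1−q)^{1/(1−q)} G[μ]^{1/(1−q)} and u_j = G[u_{j−1}^q dμ] + G[ν] + h. Then sup_j ‖u_j‖_∞ ≤ max{1, (‖G[μ]‖_∞ + ‖G[ν]‖_∞ + ‖h‖_∞)^{1/(1−q)}}, and consequently u := lim_j u_j exists pointwise and satisfies u = G[u^q dμ] + G[ν] + h on Ω (by monotone convergence). -/

import Mathlib

open MeasureTheory
open scoped ENNReal


/-- Tangent-line (Young) inequality for `f ^ r`. -/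
lemma tangent_ineq (f t : ℝ≥0∞) (hf : f ≠ ⊤) (ht0 : t ≠ 0) (ht : t ≠ ⊤) (r : ℝ)
    (hr0 : 0 ≤ r) (hr1 : r ≤ 1) :
    f ^ r ≤ t ^ r * (ENNReal.ofReal r * (f / t) + ENNReal.ofReal (1 - r)) := by
  have hg : f / t ≠ ⊤ := ENNReal.div_ne_top hf ht0
  have hfe : f = t * (f / t) := (ENNReal.mul_div_cancel ht0 ht).symm
  have key : ∀ g : ℝ≥0∞, g ≠ ⊤ → g ^ r ≤ ENNReal.ofReal r * g + ENNReal.ofReal (1 - r) := by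
    intro g hg
    lift g to NNReal using hg
    have h1 := NNReal.geom_mean_le_arith_mean2_weighted r.toNNReal (1 - r).toNNReal g 1
      (by rw [← Real.toNNReal_add hr0 (by linarith)]; simp)
    rw [NNReal.one_rpow, mul_one, mul_one, Real.coe_toNNReal r hr0] at h1
    rw [← ENNReal.coe_rpow_of_nonneg g hr0]
    unfold ENNReal.ofReal
    exact_mod_cast h1
  calc f ^ r = t ^ r * (f / t) ^ r := by
        rw [← ENNReal.mul_rpow_of_nonneg _ _ hr0, ← hfe]
    _ ≤ _ := by gcongr; exact key _ hg

/-- Uniform bound and convergence of the successive approximation scheme: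
`sup_j ‖u_j‖_∞ ≤ max {1, (‖G[μ]‖_∞ + ‖G[ν]‖_∞ + ‖h‖_∞)^{1/(1−q)}}` and the pointwise
(monotone) limit `u = lim_j u_j` satisfies `u = G[u^q dμ] + G[ν] + h` on `Ω`. -/
theorem successive_approximation_bounded_and_limit {Ω : Type*} [MeasurableSpace Ω]
    (G : Ω → Ω → ℝ≥0∞) (μ ν : Measure Ω)
    (q : ℝ) (hq0 : 0 < q) (hq1 : q < 1)
    (h : Ω → ℝ≥0∞) (u : ℕ → Ω → ℝ≥0∞)
    (hGmeas : Measurable (Function.uncurry G)) (hhmeas : Measurable h)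
    (hGμb : (⨆ z, ∫⁻ y, G z y ∂μ) ≠ ⊤)
    (hGνb : (⨆ z, ∫⁻ y, G z y ∂ν) ≠ ⊤)
    (hhb : (⨆ z, h z) ≠ ⊤)
    (hpos : 0 < (⨆ z, ∫⁻ y, G z y ∂μ) + (⨆ z, ∫⁻ y, G z y ∂ν) + (⨆ z, h z))
    (hu0 : ∀ x, u 0 x
      = ENNReal.ofReal ((1 - q) ^ (1 / (1 - q))) * (∫⁻ y, G x y ∂μ) ^ (1 / (1 - q)))
    (huj : ∀ j x, u (j + 1) x
      = (∫⁻ y, G x y * (u j y) ^ q ∂μ) + (∫⁻ y, G x y ∂ν) + h x)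
    (hiter : ∀ s : ℝ, 1 ≤ s → ∀ x,
      (∫⁻ y, G x y ∂μ) ^ s
        ≤ ENNReal.ofReal s * ∫⁻ y, G x y * (∫⁻ z, G y z ∂μ) ^ (s - 1) ∂μ) :
    (∀ j x, u j x ≤
      max 1 (((⨆ z, ∫⁻ y, G z y ∂μ) + (⨆ z, ∫⁻ y, G z y ∂ν) + (⨆ z, h z))
        ^ (1 / (1 - q))))
    ∧ ∀ x, (⨆ j, u j x)
      = (∫⁻ y, G x y * (⨆ j, u j y) ^ q ∂μ) + (∫⁻ y, G x y ∂ν) + h x := by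
  classical
  set A : ℝ≥0∞ := ⨆ z, ∫⁻ y, G z y ∂μ with hA
  set N : ℝ≥0∞ := ⨆ z, ∫⁻ y, G z y ∂ν with hN
  set P : ℝ≥0∞ := ⨆ z, h z with hP
  set B : ℝ≥0∞ := max 1 ((A + N + P) ^ (1 / (1 - q))) with hB
  have hq' : 0 < 1 - q := by linarith
  have hs0 : 0 < 1 / (1 - q) := by positivity
  have hStop : A + N + P ≠ ⊤ := by simp [hGμb, hGνb, hhb]
  have hB1 : 1 ≤ B := le_max_left _ _
  have hBtop : B ≠ ⊤ := by
    have := ENNReal.rpow_ne_top_of_nonneg hs0.le hStop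
    exact (max_lt ENNReal.one_lt_top this.lt_top).ne
  have hB0 : B ≠ 0 := (lt_of_lt_of_le one_pos hB1).ne'
  have hKA : ∀ x, ∫⁻ y, G x y ∂μ ≤ A := fun x => le_iSup (fun z => ∫⁻ y, G z y ∂μ) x
  have hNN : ∀ x, ∫⁻ y, G x y ∂ν ≤ N := fun x => le_iSup (fun z => ∫⁻ y, G z y ∂ν) x
  have hhP : ∀ x, h x ≤ P := fun x => le_iSup h x
  have hGx : ∀ x, Measurable (G x) := fun x => hGmeas.of_uncurry_left
  -- the operator maps functions bounded by `B` to such functions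
  have hSB : A + N + P ≤ B ^ (1 - q) := by
    calc A + N + P = ((A + N + P) ^ (1 / (1 - q))) ^ (1 - q) := by
          rw [← ENNReal.rpow_mul, one_div_mul_cancel hq'.ne', ENNReal.rpow_one]
      _ ≤ B ^ (1 - q) := ENNReal.rpow_le_rpow (le_max_right _ _) hq'.le
  have hTw : ∀ w : Ω → ℝ≥0∞, (∀ x, w x ≤ B) → ∀ x,
      (∫⁻ y, G x y * (w y) ^ q ∂μ) ≤ (∫⁻ y, G x y ∂μ) * B ^ q := by
    intro w hw x
    rw [← lintegral_mul_const _ (hGx x)]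
    apply lintegral_mono
    intro y
    dsimp only
    gcongr
    exact hw y
  have hBq1 : 1 ≤ B ^ q := ENNReal.one_le_rpow hB1 hq0
  have hT : ∀ w : Ω → ℝ≥0∞, (∀ x, w x ≤ B) → ∀ x,
      (∫⁻ y, G x y * (w y) ^ q ∂μ) + (∫⁻ y, G x y ∂ν) + h x ≤ B := by
    intro w hw x
    calc (∫⁻ y, G x y * (w y) ^ q ∂μ) + (∫⁻ y, G x y ∂ν) + h x
        ≤ A * B ^ q + N * B ^ q + P * B ^ q := by
          gcongr
          · exact (hTw w hw x).trans (by gcongr; exact hKA x)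
          · exact (hNN x).trans (le_mul_of_one_le_right' hBq1)
          · exact (hhP x).trans (le_mul_of_one_le_right' hBq1)
      _ = (A + N + P) * B ^ q := by ring
      _ ≤ B ^ (1 - q) * B ^ q := by gcongr
      _ = B := by
          rw [← ENNReal.rpow_add _ _ hB0 hBtop]; simp
  have hc1 : (1 - q) ^ (1 / (1 - q)) ≤ 1 :=
    Real.rpow_le_one hq'.le (by linarith) hs0.le
  have hbound : ∀ j x, u j x ≤ B := by
    intro j
    induction j with
    | zero =>
      intro x
      rw [hu0]
      calc _ ≤ 1 * (A + N + P) ^ (1 / (1 - q)) := by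
            gcongr
            · exact ENNReal.ofReal_le_one.2 hc1
            · exact (hKA x).trans (le_add_right le_self_add)
        _ ≤ B := by rw [one_mul]; exact le_max_right _ _
    | succ j ih => intro x; rw [huj]; exact hT _ ih x
  refine ⟨hbound, ?_⟩
  -- monotonicity
  have h01 : ∀ x, u 0 x ≤ u 1 x := by
    intro x
    set s : ℝ := 1 / (1 - q) with hs
    have hs1 : 1 ≤ s := by rw [hs, le_div_iff₀ hq']; linarith
    have hsq : s * q = s - 1 := by rw [hs]; field_simp; ring
    set c : ℝ := (1 - q) ^ s with hc
    have hcpos : 0 < c := Real.rpow_pos_of_pos hq' _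
    have e1 : ∀ y, G x y * (u 0 y) ^ q
        = ENNReal.ofReal (c ^ q) * (G x y * (∫⁻ z, G y z ∂μ) ^ (s - 1)) := by
      intro y
      rw [hu0, ENNReal.mul_rpow_of_nonneg _ _ hq0.le, ← ENNReal.rpow_mul, hsq,
        ENNReal.ofReal_rpow_of_pos hcpos]
      ring
    rw [huj 0 x, hu0 x]
    refine le_trans ?_ (le_add_right le_self_add)
    simp_rw [e1]
    rw [lintegral_const_mul' _ _ ENNReal.ofReal_ne_top]
    have hcs : c * s = c ^ q := by
      rw [hc, ← Real.rpow_mul hq'.le, hsq, Real.rpow_sub hq', Real.rpow_one, hs]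
      field_simp
    calc _ ≤ ENNReal.ofReal c * (ENNReal.ofReal s *
          ∫⁻ y, G x y * (∫⁻ z, G y z ∂μ) ^ (s - 1) ∂μ) := by
          gcongr
          exact hiter s hs1 x
      _ = _ := by rw [← mul_assoc, ← ENNReal.ofReal_mul hcpos.le, hcs]
  have hstep : ∀ j x, u j x ≤ u (j + 1) x := by
    intro j
    induction j with
    | zero => exact h01
    | succ j ih =>
      intro x
      rw [huj j x, huj (j + 1) x]
      gcongr with y
      exact ih y
  have hmono : ∀ x, Monotone (fun j => u j x) := fun x => monotone_nat_of_le_succ (fun j => hstep j x)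
  set U : Ω → ℝ≥0∞ := fun x => ⨆ j, u j x with hU
  have hUB : ∀ x, U x ≤ B := fun x => iSup_le (fun j => hbound j x)
  have huU : ∀ j x, u j x ≤ U x := fun j x => le_iSup (fun j => u j x) j
  set V : Ω → ℝ≥0∞ :=
    fun x => (∫⁻ y, G x y * (U y) ^ q ∂μ) + (∫⁻ y, G x y ∂ν) + h x with hV
  have hVB : ∀ x, V x ≤ B := hT U hUB
  have huV : ∀ j x, u (j + 1) x ≤ V x := by
    intro j x
    rw [huj j x, hV]
    dsimp only
    gcongr with y
    exact huU j y
  have hUV : ∀ x, U x ≤ V x := fun x => iSup_le (fun j => (hstep j x).trans (huV j x))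
  change ∀ x, U x = V x
  -- the constant
  set C : ℝ≥0∞ := ENNReal.ofReal (1 / (1 - q)) + B with hC
  have hCtop : C ≠ ⊤ := by simp [hC, hBtop]
  have hBC : B ≤ C := le_add_self
  have hC1 : 1 ≤ C := hB1.trans hBC
  have hC0 : C ≠ 0 := (lt_of_lt_of_le one_pos hC1).ne'
  have hM : ∀ j x, (∫⁻ y, G x y ∂μ) + ((∫⁻ y, G x y ∂ν) + h x) ≤ C * (u (j + 1) x) ^ (1 - q) := by
    intro j x
    rw [hC, add_mul]
    gcongr ?_ + ?_
    · have h1 : u 0 x ≤ u (j + 1) x := hmono x (Nat.zero_le _)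
      have h2 : (u 0 x) ^ (1 - q) = ENNReal.ofReal (1 - q) * ∫⁻ y, G x y ∂μ := by
        rw [hu0, ENNReal.mul_rpow_of_nonneg _ _ hq'.le, ← ENNReal.rpow_mul,
          one_div_mul_cancel hq'.ne', ENNReal.rpow_one,
          ENNReal.ofReal_rpow_of_pos (Real.rpow_pos_of_pos hq' _), ← Real.rpow_mul hq'.le,
          one_div_mul_cancel hq'.ne', Real.rpow_one]
      calc ∫⁻ y, G x y ∂μ = ENNReal.ofReal (1 / (1 - q)) * (u 0 x) ^ (1 - q) := by
            rw [h2, ← mul_assoc, ← ENNReal.ofReal_mul hs0.le, one_div_mul_cancel hq'.ne']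
            simp
        _ ≤ _ := by gcongr
    · have h1 : (∫⁻ y, G x y ∂ν) + h x ≤ u (j + 1) x := by
        rw [huj, add_assoc]; exact le_add_self
      refine h1.trans ?_
      have h2 : u (j + 1) x = (u (j + 1) x) ^ q * (u (j + 1) x) ^ (1 - q) := by
        rw [← ENNReal.rpow_add_of_nonneg _ _ hq0.le hq'.le]; simp
      calc u (j + 1) x = (u (j + 1) x) ^ q * (u (j + 1) x) ^ (1 - q) := h2
        _ ≤ B ^ q * (u (j + 1) x) ^ (1 - q) := by gcongr; exact hbound _ _
        _ ≤ B * (u (j + 1) x) ^ (1 - q) := by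
            gcongr
            calc B ^ q ≤ B ^ (1 : ℝ) := ENNReal.rpow_le_rpow_of_exponent_le hB1 hq1.le
              _ = B := ENNReal.rpow_one B
  -- the main one-step estimate
  have hmain : ∀ (j : ℕ) (D : ℝ≥0∞) (r : ℝ), 1 ≤ D → D ≠ ⊤ → 0 ≤ r → r ≤ 1 →
      (∀ x, V x ≤ D * (u j x) ^ r) →
      ∀ x, V x ≤ D ^ q * C ^ (1 - r) * (u (j + 1) x) ^ (1 - q * (1 - r)) := by
    intro j D r hD1 hDtop hr0 hr1 hyp x
    have hDq1 : 1 ≤ D ^ q := ENNReal.one_le_rpow hD1 hq0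
    have hDqtop : D ^ q ≠ ⊤ := ENNReal.rpow_ne_top_of_nonneg hq0.le hDtop
    have hMx := hM j x
    have hWdef := huj j x
    have hWtop : u (j + 1) x ≠ ⊤ := ne_top_of_le_ne_top hBtop (hbound _ _)
    set W := u (j + 1) x with hW
    set K := ∫⁻ y, G x y ∂μ with hK
    set H := (∫⁻ y, G x y ∂ν) + h x with hH
    have hVx : V x = (∫⁻ y, G x y * (U y) ^ q ∂μ) + H := by
      rw [hV, hH]; dsimp only; rw [add_assoc]
    by_cases hW0 : W = 0
    · rw [hW0, ENNReal.zero_rpow_of_pos hq', mul_zero] at hMx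
      have hz : K + H = 0 := le_antisymm hMx zero_le
      obtain ⟨hK0, hH0⟩ := add_eq_zero.1 hz
      have := hTw U hUB x
      rw [← hK, hK0, zero_mul] at this
      rw [hVx, hH0, add_zero]
      exact this.trans zero_le
    set t : ℝ≥0∞ := W ^ q / C with ht
    have hWq0 : W ^ q ≠ 0 := by
      simp [ENNReal.rpow_eq_zero_iff, hW0, hWtop]
    have hWqtop : W ^ q ≠ ⊤ := ENNReal.rpow_ne_top_of_nonneg hq0.le hWtop
    have ht0 : t ≠ 0 := ENNReal.div_ne_zero.2 ⟨hWq0, hCtop⟩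
    have httop : t ≠ ⊤ := ENNReal.div_ne_top hWqtop hC0
    set a : ℝ≥0∞ := ENNReal.ofReal r / t with ha
    have hatop : a ≠ ⊤ := ENNReal.div_ne_top ENNReal.ofReal_ne_top ht0
    set b : ℝ≥0∞ := ENNReal.ofReal (1 - r) with hb
    have htr : t ^ r ≠ ⊤ := ENNReal.rpow_ne_top_of_nonneg hr0 httop
    have htan : ∀ f : ℝ≥0∞, f ≠ ⊤ → f ^ r ≤ t ^ r * (a * f + b) := by
      intro f hf
      have := tangent_ineq f t hf ht0 httop r hr0 hr1
      rwa [← mul_div_assoc, ENNReal.mul_div_right_comm] at this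
    have hI : (∫⁻ y, G x y * (U y) ^ q ∂μ)
        ≤ D ^ q * t ^ r * (a * (∫⁻ y, G x y * (u j y) ^ q ∂μ) + b * K) := by
      have e : ∀ y, G x y * (U y) ^ q
          ≤ D ^ q * t ^ r * (a * (G x y * (u j y) ^ q) + b * G x y) := by
        intro y
        have hf : (u j y) ^ q ≠ ⊤ :=
          ENNReal.rpow_ne_top_of_nonneg hq0.le (ne_top_of_le_ne_top hBtop (hbound _ _))
        calc G x y * (U y) ^ q ≤ G x y * (D * (u j y) ^ r) ^ q := by
              gcongr; exact (hUV y).trans (hyp y)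
          _ = G x y * (D ^ q * ((u j y) ^ q) ^ r) := by
              rw [ENNReal.mul_rpow_of_nonneg _ _ hq0.le, ← ENNReal.rpow_mul, ← ENNReal.rpow_mul,
                mul_comm r q]
          _ ≤ G x y * (D ^ q * (t ^ r * (a * (u j y) ^ q + b))) := by
              gcongr; exact htan _ hf
          _ = _ := by ring
      calc _ ≤ ∫⁻ y, D ^ q * t ^ r * (a * (G x y * (u j y) ^ q) + b * G x y) ∂μ :=
            lintegral_mono e
        _ = _ := by
          rw [lintegral_const_mul' _ _ (ENNReal.mul_ne_top hDqtop htr),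
            lintegral_add_right _ ((hGx x).const_mul b),
            lintegral_const_mul' _ _ hatop, lintegral_const_mul _ (hGx x)]
    have hone : 1 ≤ t ^ r * (a + b) := by
      have := htan 1 ENNReal.one_ne_top
      rwa [ENNReal.one_rpow, mul_one] at this
    have hHle : H ≤ D ^ q * t ^ r * (a * H + b * H) := by
      calc H = 1 * 1 * H := by ring
        _ ≤ D ^ q * (t ^ r * (a + b)) * H := by gcongr
        _ = _ := by ring
    have hMt : a * W = ENNReal.ofReal r * (C * W ^ (1 - q)) := by
      have hw : W = t * (C * W ^ (1 - q)) := by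
        rw [ht, ← mul_assoc, ENNReal.div_mul_cancel hC0 hCtop,
          ← ENNReal.rpow_add_of_nonneg _ _ hq0.le hq'.le]
        simp
      calc a * W = a * (t * (C * W ^ (1 - q))) := by rw [← hw]
        _ = _ := by rw [← mul_assoc, ha, ENNReal.div_mul_cancel ht0 httop]
    have hsum : ENNReal.ofReal r + b = 1 := by
      rw [hb, ← ENNReal.ofReal_add hr0 (by linarith)]; simp
    calc V x ≤ D ^ q * t ^ r * (a * (∫⁻ y, G x y * (u j y) ^ q ∂μ) + b * K)
          + D ^ q * t ^ r * (a * H + b * H) := by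
          rw [hVx]; exact add_le_add hI hHle
      _ = D ^ q * t ^ r * (a * W + b * (K + H)) := by
          rw [hWdef, add_assoc (∫⁻ y, G x y * (u j y) ^ q ∂μ), ← hH]; ring
      _ ≤ D ^ q * t ^ r * (a * W + b * (C * W ^ (1 - q))) := by gcongr
      _ = D ^ q * (t ^ r * (C * W ^ (1 - q))) := by
          rw [hMt, ← add_mul, hsum, one_mul, mul_assoc]
      _ = D ^ q * C ^ (1 - r) * W ^ (1 - q * (1 - r)) := by
          rw [mul_assoc (D ^ q)]
          congr 1
          have e1 : W ^ (1 - q * (1 - r)) = W ^ (q * r) * W ^ (1 - q) := by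
            rw [← ENNReal.rpow_add _ _ hW0 hWtop]; congr 1; ring
          have e2 : C ^ (1 - r) = C * (C ^ r)⁻¹ := by
            rw [← ENNReal.rpow_neg, sub_eq_add_neg, ENNReal.rpow_add _ _ hC0 hCtop,
              ENNReal.rpow_one]
          rw [e1, e2, ht, ENNReal.div_rpow_of_nonneg _ _ hr0, ← ENNReal.rpow_mul, div_eq_mul_inv]
          ring
  -- iterate
  have hiterate : ∀ j : ℕ, ∀ x,
      V x ≤ C ^ (q ^ j + j * q ^ j / q) * (u j x) ^ (1 - q ^ j) := by
    intro j
    induction j with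
    | zero => intro x; simpa using (hVB x).trans hBC
    | succ j ih =>
      intro x
      have he : 0 ≤ q ^ j + j * q ^ j / q := by positivity
      have hqj : q ^ j ≤ 1 := pow_le_one₀ hq0.le hq1.le
      have hqj0 : 0 ≤ q ^ j := by positivity
      have hD1 : 1 ≤ C ^ (q ^ j + j * q ^ j / q) := by
        simpa using ENNReal.rpow_le_rpow hC1 he
      have := hmain j _ (1 - q ^ j) hD1
        (ENNReal.rpow_ne_top_of_nonneg he hCtop) (by linarith) (by linarith) ih x
      rw [← ENNReal.rpow_mul, ← ENNReal.rpow_add _ _ hC0 hCtop] at this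
      convert this using 3
      · push_cast; field_simp; ring
      · ring
  intro x
  refine le_antisymm (hUV x) ?_
  have hUtop : U x ≠ ⊤ := ne_top_of_le_ne_top hBtop (hUB x)
  have hle : ∀ j : ℕ, V x ≤ C ^ (q ^ j + j * q ^ j / q) * (U x) ^ (1 - q ^ j) := by
    intro j
    refine (hiterate j x).trans ?_
    have hqj : q ^ j ≤ 1 := pow_le_one₀ hq0.le hq1.le
    gcongr
    exact huU j x
  by_cases hU0 : U x = 0
  · have := hle 1
    rw [hU0, pow_one, ENNReal.zero_rpow_of_pos hq', mul_zero] at this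
    exact this.trans zero_le
  have t0 : Filter.Tendsto (fun j : ℕ => q ^ j) Filter.atTop (nhds 0) :=
    tendsto_pow_atTop_nhds_zero_of_lt_one hq0.le hq1
  have t1 : Filter.Tendsto (fun j : ℕ => q ^ j + j * q ^ j / q) Filter.atTop (nhds 0) := by
    have := t0.add ((tendsto_self_mul_const_pow_of_lt_one hq0.le hq1).div_const q)
    simpa using this
  have t2 : Filter.Tendsto (fun j : ℕ => 1 - q ^ j) Filter.atTop (nhds 1) := by
    simpa using t0.const_sub 1
  have hcont : ∀ b : ℝ≥0∞, b ≠ 0 → b ≠ ⊤ → Continuous (fun e : ℝ => b ^ e) := by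
    intro b hb0 hbt
    lift b to NNReal using hbt
    have hb0' : b ≠ 0 := by exact_mod_cast hb0
    have : (fun e : ℝ => (b : ℝ≥0∞) ^ e) = fun e : ℝ => ((b ^ e : NNReal) : ℝ≥0∞) := by
      funext e; rw [ENNReal.coe_rpow_of_ne_zero hb0']
    rw [this]
    refine ENNReal.continuous_coe.comp ?_
    refine continuous_iff_continuousAt.2 (fun e => ?_)
    exact (NNReal.continuousAt_rpow (x := b) (y := e) (Or.inl hb0')).comp
      (f := fun e : ℝ => (b, e)) (by fun_prop)
  have t3 := ((hcont C hC0 hCtop).tendsto 0).comp t1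
  have t4 := ((hcont (U x) hU0 hUtop).tendsto 1).comp t2
  have t5 := ENNReal.Tendsto.mul t3 (Or.inl (by simp)) t4 (Or.inr (by simp))
  simp only [ENNReal.rpow_zero, ENNReal.rpow_one, one_mul] at t5
  exact ge_of_tendsto' t5 hle
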